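/- Let c > 0, T ∈ (0,∞], and let λ : [0,T) → ℝ be C² with λ(0) = 0, λ′(0) = 1/2, and λ′(t) > 0, λ″(t) > 0, and λ′(t)³/λ″(t) ≤ c²/2 for all t ∈ [0,T). Define s(t) = c² − c²/(4·λ′(t)²), which is the unique solution of λ_c′(s(t)) = λ′(t) for λ_c(u) = c² − c√(c²−u). Then s is differentiable with s′(t) = c²·λ″(t)/(2·λ′(t)³) ≥ 1 for all t ∈ [0,T). -/

import Mathlib

/-!
At `u = s(t)` one has `c² - u = (c / (2 λ'(t)))²`, a nonzero square with positive root, so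
`λ_c'(u) = c / (2 √(c² - u))` evaluates to `λ'(t)`. The formula for `s'` is the quotient rule,
and `s' ≥ 1` is the curvature bound `λ'³ / λ'' ≤ c² / 2` with denominators cleared.
-/

/-- The domain `[0,T)` of a driving function, for `T ∈ (0,∞]`. -/
def drivingDomain (T : EReal) : Set ℝ := {t : ℝ | 0 ≤ t ∧ (t : EReal) < T}

/-- Case 1 of Lemma 5.2 (the time-change lemma): let `λ` be `C²` on `[0,T)` with
`λ(0) = 0`, `λ'(0) = 1/2`, `λ' > 0`, `λ'' > 0`, and Loewner curvature
`λ'³/λ'' ≤ c²/2`.  With `λ_c(u) = c² - c √(c² - u)` (the driving function of the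
normalized curve `γ^c`), the time change `s(t) = c² - c²/(4 λ'(t)²)` solves
`λ_c'(s(t)) = λ'(t)`, and is differentiable with
`s'(t) = c² λ''(t) / (2 λ'(t)³) ≥ 1`. -/
theorem time_change_ge_one
    (c : ℝ) (hc : 0 < c) (T : EReal) (hT : 0 < T) (l : ℝ → ℝ)
    (hC2 : ContDiffOn ℝ 2 l (drivingDomain T))
    (h0 : l 0 = 0)
    (h'0 : derivWithin l (drivingDomain T) 0 = 1 / 2)
    (hl : ∀ t : ℝ, 0 ≤ t → (t : EReal) < T →
      0 < derivWithin l (drivingDomain T) t ∧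
      0 < derivWithin (derivWithin l (drivingDomain T)) (drivingDomain T) t ∧
      (derivWithin l (drivingDomain T) t) ^ 3
          / derivWithin (derivWithin l (drivingDomain T)) (drivingDomain T) t
        ≤ c ^ 2 / 2) :
    ∀ t : ℝ, 0 ≤ t → (t : EReal) < T →
      deriv (fun u : ℝ => c ^ 2 - c * Real.sqrt (c ^ 2 - u))
          (c ^ 2 - c ^ 2 / (4 * (derivWithin l (drivingDomain T) t) ^ 2))
        = derivWithin l (drivingDomain T) t ∧
      HasDerivWithinAt
        (fun u : ℝ => c ^ 2 - c ^ 2 / (4 * (derivWithin l (drivingDomain T) u) ^ 2))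
        (c ^ 2 * derivWithin (derivWithin l (drivingDomain T)) (drivingDomain T) t
          / (2 * (derivWithin l (drivingDomain T) t) ^ 3))
        (drivingDomain T) t ∧
      1 ≤ c ^ 2 * derivWithin (derivWithin l (drivingDomain T)) (drivingDomain T) t
          / (2 * (derivWithin l (drivingDomain T) t) ^ 3) := by
  intro t ht0 htT
  obtain ⟨hp, hq, hcurv⟩ := hl t ht0 htT
  -- `derivWithin` vanishes where the derivative does not exist, so `λ'' > 0` already gives
  -- differentiability of `λ'` at `t`.
  have hd : HasDerivWithinAt (derivWithin l (drivingDomain T))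
      (derivWithin (derivWithin l (drivingDomain T)) (drivingDomain T) t) (drivingDomain T) t :=
    (differentiableWithinAt_of_derivWithin_ne_zero hq.ne').hasDerivWithinAt
  generalize derivWithin (derivWithin l (drivingDomain T)) (drivingDomain T) t = q at *
  generalize derivWithin l (drivingDomain T) = f at *
  refine ⟨?_, ?_, ?_⟩
  · have hsub : c ^ 2 - (c ^ 2 - c ^ 2 / (4 * f t ^ 2)) = (c / (2 * f t)) ^ 2 := by
      field_simp
      ring
    have hne : c ^ 2 - (c ^ 2 - c ^ 2 / (4 * f t ^ 2)) ≠ 0 := by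
      rw [hsub]
      positivity
    have h := ((((hasDerivAt_id' (c ^ 2 - c ^ 2 / (4 * f t ^ 2))).const_sub (c ^ 2)).sqrt
      hne).const_mul c).const_sub (c ^ 2)
    rw [h.deriv, hsub, Real.sqrt_sq (by positivity)]
    field_simp
  · have hne : 4 * f t ^ 2 ≠ 0 := by positivity
    have h := ((hasDerivWithinAt_const t (drivingDomain T) (c ^ 2)).div
      ((hd.pow 2).const_mul 4) hne).const_sub (c ^ 2)
    refine h.congr_deriv ?_
    simp only [Pi.pow_apply]
    field_simp
    ring
  · rw [div_le_iff₀ hq] at hcurv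
    rw [le_div_iff₀ (by positivity)]
    linarith
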